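/- Let $n \ge 2$ be an integer and define $\Gamma_- : (-1,1) \to \mathbb{R}$ by $$\Gamma_-(s) = \sqrt[n]{\frac{1+s}{1-s}}\;\exp\!\left(\frac{n-2}{n\sqrt{n-1}}\,\arctan\!\big(s\sqrt{n-1}\big)\right).$$ Then: (i) $\Gamma_-$ is differentiable on $(-1,1)$ with $$\Gamma_-'(s) = \Gamma_-(s)\cdot\frac{1+s^2}{(1-s^2)\,\big(1+(n-1)s^2\big)} > 0,$$ so $\Gamma_-$ is strictly increasing; (ii) $\Gamma_-$ maps $(-1,1)$ onto $(0,\infty)$; (iii) $\Gamma_-(0) = 1$ and $\Gamma_-(-s)\,\Gamma_-(s) = 1$ for all $s \in (-1,1)$. -/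

import Mathlib

/-- The function `Γ₋(s) = ((1+s)/(1-s))^(1/n) · exp( ((n-2)/(n√(n-1))) · arctan(s√(n-1)) )`,
meant for `-1 < s < 1` and `n ≥ 2`; the first factor is the `n`-th root of a positive real. -/
noncomputable def GammaMinus (n : ℕ) (s : ℝ) : ℝ :=
  ((1 + s) / (1 - s)) ^ (1 / (n : ℝ)) *
    Real.exp ((((n : ℝ) - 2) / ((n : ℝ) * Real.sqrt ((n : ℝ) - 1))) *
      Real.arctan (s * Real.sqrt ((n : ℝ) - 1)))

theorem GammaMinus_pos (n : ℕ) {s : ℝ} (hs : s ∈ Set.Ioo (-1 : ℝ) 1) : 0 < GammaMinus n s := by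
  have h1 : 0 < 1 + s := by linarith [hs.1]
  have h2 : 0 < 1 - s := by linarith [hs.2]
  unfold GammaMinus
  positivity

theorem GammaMinus_zero (n : ℕ) : GammaMinus n 0 = 1 := by
  simp [GammaMinus]

theorem GammaMinus_neg_mul_self (n : ℕ) {s : ℝ} (hs : s ∈ Set.Ioo (-1 : ℝ) 1) :
    GammaMinus n (-s) * GammaMinus n s = 1 := by
  have h1 : 0 < 1 + s := by linarith [hs.1]
  have h2 : 0 < 1 - s := by linarith [hs.2]
  have h3 : (1 + -s) / (1 - -s) * ((1 + s) / (1 - s)) = 1 := by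
    rw [← sub_eq_add_neg, sub_neg_eq_add]
    field_simp
  have h4 : 0 ≤ (1 + -s) / (1 - -s) := by
    rw [← sub_eq_add_neg, sub_neg_eq_add]
    positivity
  unfold GammaMinus
  rw [mul_mul_mul_comm, ← Real.mul_rpow h4 (by positivity), h3, ← Real.exp_add, neg_mul,
    Real.arctan_neg]
  simp

theorem hasDerivAt_GammaMinus {n : ℕ} (hn : 2 ≤ n) {s : ℝ} (hs : s ∈ Set.Ioo (-1 : ℝ) 1) :
    HasDerivAt (GammaMinus n)
      (GammaMinus n s * ((1 + s ^ 2) / ((1 - s ^ 2) * (1 + ((n : ℝ) - 1) * s ^ 2)))) s := by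
  have h1 : 0 < 1 + s := by linarith [hs.1]
  have h2 : 0 < 1 - s := by linarith [hs.2]
  have hn' : (2 : ℝ) ≤ n := by exact_mod_cast hn
  have hm : 0 < (n : ℝ) - 1 := by linarith
  have hq : 0 < Real.sqrt ((n : ℝ) - 1) := Real.sqrt_pos.2 hm
  have hsq : Real.sqrt ((n : ℝ) - 1) ^ 2 = (n : ℝ) - 1 := Real.sq_sqrt hm.le
  have hr : 0 < (1 + s) / (1 - s) := by positivity
  have hbase : HasDerivAt (fun x : ℝ => (1 + x) / (1 - x)) (2 / (1 - s) ^ 2) s := by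
    refine (((hasDerivAt_id s).const_add 1).div ((hasDerivAt_id s).const_sub 1)
      h2.ne').congr_deriv ?_
    simp only [id]
    ring
  have hexp := ((((hasDerivAt_id s).mul_const (Real.sqrt ((n : ℝ) - 1))).arctan).const_mul
    (((n : ℝ) - 2) / ((n : ℝ) * Real.sqrt ((n : ℝ) - 1)))).exp
  have hprod := (hbase.rpow_const (p := 1 / (n : ℝ)) (Or.inl hr.ne')).mul hexp
  refine hprod.congr_deriv ?_
  unfold GammaMinus
  simp only [id]
  rw [Real.rpow_sub_one hr.ne', mul_pow, hsq]
  have hD : 0 < 1 + s ^ 2 * ((n : ℝ) - 1) := by positivity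
  have hD' : 0 < 1 + ((n : ℝ) - 1) * s ^ 2 := by positivity
  have hE : 0 < 1 - s ^ 2 := by nlinarith
  generalize ((1 + s) / (1 - s)) ^ (1 / (n : ℝ)) = A
  generalize Real.exp _ = B
  have key : 2 / (1 - s) ^ 2 * (1 / (n : ℝ)) / ((1 + s) / (1 - s)) +
      ((n : ℝ) - 2) / ((n : ℝ) * Real.sqrt ((n : ℝ) - 1)) *
        (1 / (1 + s ^ 2 * ((n : ℝ) - 1)) * Real.sqrt ((n : ℝ) - 1)) =
      (1 + s ^ 2) / ((1 - s ^ 2) * (1 + ((n : ℝ) - 1) * s ^ 2)) := by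
    have hn0 : (n : ℝ) ≠ 0 := by positivity
    have e1 : 2 / (1 - s) ^ 2 * (1 / (n : ℝ)) / ((1 + s) / (1 - s)) =
        2 / (n * (1 - s ^ 2)) := by
      rw [show 1 - s ^ 2 = (1 + s) * (1 - s) by ring]
      field_simp
    have e2 : ((n : ℝ) - 2) / ((n : ℝ) * Real.sqrt ((n : ℝ) - 1)) *
        (1 / (1 + s ^ 2 * ((n : ℝ) - 1)) * Real.sqrt ((n : ℝ) - 1)) =
        ((n : ℝ) - 2) / (n * (1 + ((n : ℝ) - 1) * s ^ 2)) := by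
      rw [mul_comm (s ^ 2)]
      field_simp
    rw [e1, e2, div_add_div _ _ (by positivity) (by positivity),
      div_eq_div_iff (by positivity) (by positivity)]
    ring
  rw [← key]
  ring

theorem logDeriv_GammaMinus_pos {n : ℕ} (hn : 2 ≤ n) {s : ℝ} (hs : s ∈ Set.Ioo (-1 : ℝ) 1) :
    0 < (1 + s ^ 2) / ((1 - s ^ 2) * (1 + ((n : ℝ) - 1) * s ^ 2)) := by
  have hn' : (2 : ℝ) ≤ n := by exact_mod_cast hn
  have hm : 0 < (n : ℝ) - 1 := by linarith
  have hE : 0 < 1 - s ^ 2 := by nlinarith [hs.1, hs.2]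
  positivity

theorem continuousOn_GammaMinus {n : ℕ} (hn : 2 ≤ n) :
    ContinuousOn (GammaMinus n) (Set.Ioo (-1 : ℝ) 1) := fun _ hs =>
  (hasDerivAt_GammaMinus hn hs).continuousAt.continuousWithinAt

theorem strictMonoOn_GammaMinus {n : ℕ} (hn : 2 ≤ n) :
    StrictMonoOn (GammaMinus n) (Set.Ioo (-1 : ℝ) 1) := by
  refine strictMonoOn_of_deriv_pos (convex_Ioo _ _) (continuousOn_GammaMinus hn) fun s hs => ?_
  rw [interior_Ioo] at hs
  rw [(hasDerivAt_GammaMinus hn hs).deriv]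
  exact mul_pos (GammaMinus_pos n hs) (logDeriv_GammaMinus_pos hn hs)

theorem rpow_le_GammaMinus {n : ℕ} (hn : 2 ≤ n) {s : ℝ} (hs0 : 0 ≤ s) (hs1 : s < 1) :
    ((1 + s) / (1 - s)) ^ (1 / (n : ℝ)) ≤ GammaMinus n s := by
  have hn' : (0 : ℝ) ≤ (n : ℝ) - 2 := sub_nonneg.2 (by exact_mod_cast hn)
  have h2 : 0 < 1 - s := by linarith
  have ha : 0 ≤ Real.arctan (s * Real.sqrt ((n : ℝ) - 1)) :=
    Real.arctan_nonneg.2 (by positivity)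
  exact le_mul_of_one_le_right (by positivity) (Real.one_le_exp (by positivity))

theorem exists_GammaMinus_eq_of_one_le {n : ℕ} (hn : 2 ≤ n) {y : ℝ} (hy : 1 ≤ y) :
    ∃ s ∈ Set.Ioo (-1 : ℝ) 1, GammaMinus n s = y := by
  have hyn : 1 ≤ y ^ n := one_le_pow₀ hy
  set t : ℝ := (y ^ n - 1) / (y ^ n + 1) with ht
  have ht0 : 0 ≤ t := div_nonneg (by linarith) (by linarith)
  have ht1 : t < 1 := (div_lt_one (by linarith)).2 (by linarith)
  have hq : (1 + t) / (1 - t) = y ^ n := by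
    have h : y ^ n + 1 ≠ 0 := by positivity
    rw [div_eq_iff (by linarith), ht]
    field_simp
    ring
  have hle : y ≤ GammaMinus n t := by
    have := rpow_le_GammaMinus hn ht0 ht1
    rwa [hq, one_div, Real.pow_rpow_inv_natCast (by linarith) (by omega)] at this
  have hsub : Set.Icc 0 t ⊆ Set.Ioo (-1 : ℝ) 1 := fun x hx =>
    ⟨by linarith [hx.1], by linarith [hx.2]⟩
  obtain ⟨s, hs, rfl⟩ := intermediate_value_Icc ht0 ((continuousOn_GammaMinus hn).mono hsub)
    ⟨(GammaMinus_zero n).trans_le hy, hle⟩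
  exact ⟨s, hsub hs, rfl⟩

theorem image_GammaMinus {n : ℕ} (hn : 2 ≤ n) :
    GammaMinus n '' Set.Ioo (-1 : ℝ) 1 = Set.Ioi 0 := by
  refine Set.Subset.antisymm (Set.image_subset_iff.2 fun s hs => GammaMinus_pos n hs) ?_
  intro y (hy : 0 < y)
  rcases le_total 1 y with h | h
  · exact exists_GammaMinus_eq_of_one_le hn h
  · obtain ⟨s, hs, hsy⟩ := exists_GammaMinus_eq_of_one_le hn ((one_le_inv₀ hy).2 h)
    refine ⟨-s, ⟨by linarith [hs.2], by linarith [hs.1]⟩, ?_⟩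
    have := GammaMinus_neg_mul_self n hs
    rwa [hsy, mul_inv_eq_one₀ hy.ne'] at this

theorem stmt8 (n : ℕ) (hn : 2 ≤ n) :
    (∀ s ∈ Set.Ioo (-1 : ℝ) 1,
        HasDerivAt (GammaMinus n)
          (GammaMinus n s * ((1 + s ^ 2) / ((1 - s ^ 2) * (1 + ((n : ℝ) - 1) * s ^ 2)))) s ∧
        0 < GammaMinus n s * ((1 + s ^ 2) / ((1 - s ^ 2) * (1 + ((n : ℝ) - 1) * s ^ 2)))) ∧
    StrictMonoOn (GammaMinus n) (Set.Ioo (-1 : ℝ) 1) ∧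
    GammaMinus n '' Set.Ioo (-1 : ℝ) 1 = Set.Ioi 0 ∧
    GammaMinus n 0 = 1 ∧
    ∀ s ∈ Set.Ioo (-1 : ℝ) 1, GammaMinus n (-s) * GammaMinus n s = 1 :=
  ⟨fun _ hs => ⟨hasDerivAt_GammaMinus hn hs,
      mul_pos (GammaMinus_pos n hs) (logDeriv_GammaMinus_pos hn hs)⟩,
    strictMonoOn_GammaMinus hn, image_GammaMinus hn, GammaMinus_zero n,
    fun _ hs => GammaMinus_neg_mul_self n hs⟩
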